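/- For every n ≥ 0, let S_n be the grid graph on vertex set [-n, n]² ⊆ ℤ². Then for every real number ε with 1/2 ≤ ε ≤ 1, there exists a valid activator sequence v = (v_n)_{n≥0} such that the burning density δ(S, v) exists and equals ε. -/

import Mathlib

/-!
Fire spreads at unit `L1`-speed and an activation at time `t` happens inside `[-t, t]²`, so the
boundary of the growing grid never obstructs it: an activation at `w t` burns the whole ball of
radius `k` around `w t` by time `t + k`. Activating a vertex that is already burned would change
nothing, so any prescribed sequence of sources `w` can be made valid by skipping such activations
(`burnSet_filterSeq`).

Put `b = 2ε - 1 ∈ [0, 1]` and let the sources visit the four rays through `(±1, ±b)` cyclically, at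
speed one (`source`). At scale `n` the burned set is then close to the convex hull of the unit
`L1`-ball and the four points `(±1, ±b)`, which is the hexagon `|x| ≤ 1, (1 - b)|x| + |y| ≤ 1` of
area `2 + 2b`, that is, a proportion `(1 + b) / 2 = ε` of the square `[-1, 1]²`. Precisely, with
`c = 1 - b` and `hexagon c m` the lattice points of the `m`-fold dilate,
`hexagon c (n - 16) ⊆ B_n ⊆ hexagon c n` (`hexagon_subset`, `fires_subset`), and counting lattice
points column by column (`hexagon_ncard_le`, `le_hexagon_ncard`) gives the limit.
-/

open Filter Topology

namespace Burning

/-- Points of the `d`-dimensional integer lattice. -/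
abbrev Pt (d : ℕ) := Fin d → ℤ

/-- The `L1`-distance between two lattice points. -/
def dist1 {d : ℕ} (x y : Pt d) : ℤ := ∑ i, |x i - y i|

/-- The `L1`-norm of a lattice point. -/
def norm1 {d : ℕ} (x : Pt d) : ℤ := ∑ i, |x i|

/-- The closed neighbourhood of the set `B` in the grid graph on the vertex set `Vn`
(two vertices adjacent iff at `L1`-distance `1`). -/
def nbhd {d : ℕ} (Vn : Set (Pt d)) (B : Set (Pt d)) : Set (Pt d) :=
  B ∪ {x | x ∈ Vn ∧ ∃ b ∈ B, dist1 x b = 1}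

/-- The burned sets of the activator sequence `v` in the sequence of grid graphs on the
vertex sets `V n`; `v n = none` means no vertex is activated at time `n` (the symbol `•`). -/
def burnSet {d : ℕ} (V : ℕ → Set (Pt d)) (v : ℕ → Option (Pt d)) : ℕ → Set (Pt d)
  | 0 => (v 0).elim ∅ (fun x => {x})
  | n + 1 => nbhd (V (n + 1)) (burnSet V v n) ∪ (v (n + 1)).elim ∅ (fun x => {x})

/-- `v` is an activator sequence for the vertex sets `V`: every activated vertex is a
vertex of the current graph. -/
def IsActivator {d : ℕ} (V : ℕ → Set (Pt d)) (v : ℕ → Option (Pt d)) : Prop :=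
  ∀ n x, v n = some x → x ∈ V n

/-- `v` is a valid activator sequence: each newly activated vertex lies in the current
vertex set and is not already burned at the current step. -/
def IsValid {d : ℕ} (V : ℕ → Set (Pt d)) (v : ℕ → Option (Pt d)) : Prop :=
  ∀ n x, v (n + 1) = some x →
    x ∈ V (n + 1) ∧ x ∉ nbhd (V (n + 1)) (burnSet V v n)

/-- The proportion of burned vertices at time `n`. -/
noncomputable def densitySeq {d : ℕ} (V : ℕ → Set (Pt d)) (v : ℕ → Option (Pt d))
    (n : ℕ) : ℝ :=
  ((burnSet V v n).ncard : ℝ) / ((V n).ncard : ℝ)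

/-- The closed `L1`-ball of radius `r` centred at `P`. -/
def ball1 {d : ℕ} (P : Pt d) (r : ℤ) : Set (Pt d) := {x | norm1 (x - P) ≤ r}

/-- The `L1`-sphere of radius `r` centred at `P`. -/
def sphere1 {d : ℕ} (P : Pt d) (r : ℤ) : Set (Pt d) := {x | norm1 (x - P) = r}

/-- The square grid `[-a, a]² ⊆ ℤ²`. -/
def sqGrid (a : ℤ) : Set (Pt 2) := {x | ∀ i, |x i| ≤ a}

/-- The cube grid `[-a, a]^d ⊆ ℤ^d`. -/
def cubeGrid (d : ℕ) (a : ℤ) : Set (Pt d) := {x | ∀ i, |x i| ≤ a}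

/-- The quadrant grid `[0, a]² ⊆ ℤ²`. -/
def quadGrid (a : ℤ) : Set (Pt 2) := {x | ∀ i, 0 ≤ x i ∧ x i ≤ a}

end Burning

namespace Burning

/-! ### Prescribed sources -/

/-- The burned sets when `w n` is ignited at every time `n`, whether or not it already burns. -/
def fires (V : ℕ → Set (Pt 2)) (w : ℕ → Pt 2) : ℕ → Set (Pt 2)
  | 0 => {w 0}
  | n + 1 => nbhd (V (n + 1)) (fires V w n) ∪ {w (n + 1)}

open Classical in
/-- The activator sequence that follows `w`, skipping the vertices that already burn. -/
noncomputable def filterSeq (V : ℕ → Set (Pt 2)) (w : ℕ → Pt 2) : ℕ → Option (Pt 2)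
  | 0 => some (w 0)
  | n + 1 => if w (n + 1) ∈ nbhd (V (n + 1)) (fires V w n) then none else some (w (n + 1))

theorem burnSet_filterSeq (V : ℕ → Set (Pt 2)) (w : ℕ → Pt 2) (n : ℕ) :
    burnSet V (filterSeq V w) n = fires V w n := by
  induction n with
  | zero => simp [burnSet, filterSeq, fires]
  | succ n ih =>
    simp only [burnSet, filterSeq, fires, ih]
    split_ifs with h
    · simp [Set.insert_eq_of_mem h]
    · simp

theorem filterSeq_eq {V : ℕ → Set (Pt 2)} {w : ℕ → Pt 2} {n : ℕ} {x : Pt 2}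
    (h : filterSeq V w n = some x) : x = w n := by
  cases n with
  | zero => simpa [filterSeq, eq_comm] using h
  | succ n =>
    simp only [filterSeq] at h
    split_ifs at h
    simpa [eq_comm] using h

theorem fires_mono (V : ℕ → Set (Pt 2)) (w : ℕ → Pt 2) (n : ℕ) :
    fires V w n ⊆ fires V w (n + 1) :=
  fun _ hx => Or.inl (Or.inl hx)

theorem source_mem_fires (V : ℕ → Set (Pt 2)) (w : ℕ → Pt 2) (n : ℕ) : w n ∈ fires V w n := by
  cases n with
  | zero => simp [fires]
  | succ n => exact Or.inr rfl

/-- A point other than `y` has a lattice neighbour that is one step closer to `y`. -/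
theorem exists_closer {x y : Pt 2} (h : x ≠ y) :
    ∃ z : Pt 2, dist1 x z = 1 ∧ dist1 z y = dist1 x y - 1 := by
  simp only [dist1, Fin.sum_univ_two]
  rcases lt_trichotomy (x 0) (y 0) with h0 | h0 | h0
  · refine ⟨![x 0 + 1, x 1], by simp, by simp; grind⟩
  · rcases lt_trichotomy (x 1) (y 1) with h1 | h1 | h1
    · refine ⟨![x 0, x 1 + 1], by simp, by simp; grind⟩
    · exact absurd (by ext i; fin_cases i <;> assumption) h
    · refine ⟨![x 0, x 1 - 1], by simp, by simp; grind⟩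
  · refine ⟨![x 0 - 1, x 1], by simp, by simp; grind⟩

/-- A source inside the grid burns its whole `L1`-ball: the grid grows as fast as the fire. -/
theorem mem_fires_of_dist {V : ℕ → Set (Pt 2)} (hV : ∀ n : ℕ, V n = sqGrid n) {w : ℕ → Pt 2}
    {t : ℕ} (hw : w t ∈ V t) (k : ℕ) (x : Pt 2) (hx : dist1 x (w t) ≤ k) :
    x ∈ fires V w (t + k) := by
  induction k generalizing x with
  | zero =>
    by_cases h : x = w t
    · rw [h]
      exact source_mem_fires V w t
    · obtain ⟨z, -, hz⟩ := exists_closer h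
      have : 0 ≤ dist1 z (w t) := Finset.sum_nonneg fun i _ => abs_nonneg _
      push_cast at hx
      omega
  | succ k ih =>
    by_cases h : x = w t
    · refine fires_mono V w (t + k) (ih x ?_)
      subst h
      simp [dist1]
    · obtain ⟨z, h1, hz⟩ := exists_closer h
      refine Or.inl (Or.inr ⟨?_, z, ih z (by push_cast at hx; omega), h1⟩)
      rw [hV] at hw ⊢
      simp only [sqGrid, Set.mem_ofPred_eq, Fin.forall_fin_two, dist1, Fin.sum_univ_two]
        at hw hx ⊢
      push_cast at hx ⊢
      grind

/-! ### The hexagon and its sources -/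

/-- The lattice points of the `m`-fold dilate of the hexagon `|x| ≤ 1, c|x| + |y| ≤ 1`. -/
def hexagon (c : ℝ) (m : ℕ) : Set (Pt 2) :=
  {x | |x 0| ≤ m ∧ c * |(x 0 : ℝ)| + |(x 1 : ℝ)| ≤ m}

/-- The sources: during the times `4k, …, 4k + 3` the four points `(±4k, ±⌊4kb⌋)`, in turn. -/
noncomputable def source (b : ℝ) (t : ℕ) : Pt 2 :=
  ![(if t % 4 < 2 then 1 else -1) * (4 * (t / 4 : ℕ) : ℤ),
    (if t % 2 = 0 then 1 else -1) * ⌊b * (4 * (t / 4 : ℕ) : ℝ)⌋]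

theorem abs_source_zero (b : ℝ) (t : ℕ) : |source b t 0| = 4 * (t / 4 : ℕ) := by
  have h : (0 : ℤ) ≤ 4 * (t / 4 : ℕ) := by positivity
  simp only [source, Matrix.cons_val_zero, abs_mul (ite _ _ _), abs_of_nonneg h]
  split_ifs <;> simp

theorem abs_source_one {b : ℝ} (hb : 0 ≤ b) (t : ℕ) :
    |source b t 1| = ⌊b * (4 * (t / 4 : ℕ) : ℝ)⌋ := by
  have h : 0 ≤ ⌊b * (4 * (t / 4 : ℕ) : ℝ)⌋ := Int.floor_nonneg.2 (by positivity)
  simp only [source, Matrix.cons_val_one, Matrix.cons_val_zero, abs_mul, abs_of_nonneg h]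
  split_ifs <;> simp

theorem source_mem_hexagon {b : ℝ} (hb : 0 ≤ b) (t : ℕ) :
    source b t ∈ hexagon (1 - b) t := by
  have h4 : 4 * (t / 4) ≤ t := Nat.mul_div_le t 4
  have h4' : (4 * (t / 4 : ℕ) : ℝ) ≤ t := by exact_mod_cast h4
  refine ⟨by rw [abs_source_zero]; exact_mod_cast h4, ?_⟩
  rw [← Int.cast_abs, ← Int.cast_abs, abs_source_zero, abs_source_one hb]
  have := Int.floor_le (b * (4 * (t / 4 : ℕ) : ℝ))
  simp only [Int.cast_mul, Int.cast_ofNat, Int.cast_natCast]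
  linarith

/-- All four sign patterns occur during the times `4k, …, 4k + 3`, so one of these sources lies in
the quadrant of `x`, and its distance to `x` is computed from absolute values. -/
theorem exists_source {b : ℝ} (hb : 0 ≤ b) (x : Pt 2) (k : ℕ) :
    ∃ j < 4, dist1 x (source b (4 * k + j)) =
      |(|x 0| - 4 * k)| + |(|x 1| - ⌊b * (4 * k : ℝ)⌋)| := by
  have h : 0 ≤ ⌊b * (4 * k : ℝ)⌋ := Int.floor_nonneg.2 (by positivity)
  have key : ∀ j < 4, (4 * k + j) / 4 = k := by intro j hj; omega
  have key2 : ∀ j < 4, (4 * k + j) % 4 = j := by intro j hj; omega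
  have key3 : ∀ j, (4 * k + j) % 2 = j % 2 := by intro j; omega
  rcases le_total 0 (x 0) with h0 | h0 <;> rcases le_total 0 (x 1) with h1 | h1
  · refine ⟨0, by norm_num, ?_⟩
    simp only [dist1, Fin.sum_univ_two, source, key 0 (by norm_num), key2 0 (by norm_num), key3]
    simp
    grind
  · refine ⟨1, by norm_num, ?_⟩
    simp only [dist1, Fin.sum_univ_two, source, key 1 (by norm_num), key2 1 (by norm_num), key3]
    simp
    grind
  · refine ⟨2, by norm_num, ?_⟩
    simp only [dist1, Fin.sum_univ_two, source, key 2 (by norm_num), key2 2 (by norm_num), key3]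
    simp
    grind
  · refine ⟨3, by norm_num, ?_⟩
    simp only [dist1, Fin.sum_univ_two, source, key 3 (by norm_num), key2 3 (by norm_num), key3]
    simp
    grind

theorem hexagon_subset_grid {c : ℝ} (hc : 0 ≤ c) (m : ℕ) : hexagon c m ⊆ sqGrid m := by
  rintro x ⟨h0, h1⟩
  simp only [sqGrid, Set.mem_ofPred_eq, Fin.forall_fin_two]
  refine ⟨h0, ?_⟩
  have : 0 ≤ c * |(x 0 : ℝ)| := by positivity
  have h : |(x 1 : ℝ)| ≤ m := by linarith
  exact_mod_cast h

/-- The fire never leaves the hexagon: as `c = 1 - b ≤ 1`, one step to a neighbour raises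
`c|x| + |y|` by at most `1`. -/
theorem fires_subset {V : ℕ → Set (Pt 2)} (hV : ∀ n : ℕ, V n = sqGrid n) {b : ℝ}
    (hb : 0 ≤ b) (hb1 : b ≤ 1) (n : ℕ) : fires V (source b) n ⊆ hexagon (1 - b) n := by
  induction n with
  | zero =>
    rintro x rfl
    exact source_mem_hexagon hb 0
  | succ n ih =>
    rintro x ((hx | ⟨hxV, y, hy, hxy⟩) | rfl)
    · obtain ⟨h0, h1⟩ := ih hx
      constructor <;> push_cast <;> linarith
    · obtain ⟨h0, h1⟩ := ih hy
      rw [hV] at hxV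
      refine ⟨hxV 0, ?_⟩
      simp only [dist1, Fin.sum_univ_two] at hxy
      have hxy' : |(x 0 : ℝ) - y 0| + |(x 1 : ℝ) - y 1| = 1 := by exact_mod_cast hxy
      have e0 : |(x 0 : ℝ)| ≤ |(y 0 : ℝ)| + |(x 0 : ℝ) - y 0| := by
        have := abs_add_le (y 0 : ℝ) (x 0 - y 0); simpa using this
      have e1 : |(x 1 : ℝ)| ≤ |(y 1 : ℝ)| + |(x 1 : ℝ) - y 1| := by
        have := abs_add_le (y 1 : ℝ) (x 1 - y 1); simpa using this
      push_cast
      nlinarith [abs_nonneg ((x 0 : ℝ) - y 0),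
        mul_le_mul_of_nonneg_left e0 (sub_nonneg.2 hb1)]
    · exact source_mem_hexagon hb (n + 1)

/-- The hexagon, shrunk by a constant, is burned: a point `(x, y)` is reached in time from the
first source on the ray of its quadrant that passes `|x|` or `|y|` in one coordinate. -/
theorem hexagon_subset {V : ℕ → Set (Pt 2)} (hV : ∀ n : ℕ, V n = sqGrid n) {b : ℝ}
    (hb : 0 ≤ b) (hb1 : b ≤ 1) (m : ℕ) :
    hexagon (1 - b) m ⊆ fires V (source b) (m + 16) := by
  rintro x ⟨h0, h1⟩
  have hex : ∃ k : ℕ, |x 0| ≤ 4 * k ∨ |x 1| ≤ ⌊b * (4 * k : ℝ)⌋ :=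
    ⟨(x 0).natAbs, Or.inl (by rw [Int.abs_eq_natAbs]; omega)⟩
  classical
  -- Minimality of `k` bounds how far source `k` overshoots, since `b ≤ 1` and sources are 4 apart.
  obtain ⟨k, hk, hmin⟩ : ∃ k : ℕ, (|x 0| ≤ 4 * k ∨ |x 1| ≤ ⌊b * (4 * k : ℝ)⌋) ∧
      (k = 0 ∨ (4 * k < |x 0| + 4 ∧ ⌊b * (4 * k : ℝ)⌋ < |x 1| + 4 + 1)) := by
    refine ⟨Nat.find hex, Nat.find_spec hex, ?_⟩
    rcases hk : Nat.find hex with _ | k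
    · exact Or.inl rfl
    · right
      have := Nat.find_min hex (m := k) (by omega)
      push Not at this
      obtain ⟨g0, g1⟩ := this
      refine ⟨by push_cast; omega, ?_⟩
      rw [Int.floor_lt] at g1 ⊢
      push_cast at g1 ⊢
      nlinarith
  obtain ⟨j, hj, hd⟩ := exists_source hb x k
  set f := ⌊b * (4 * k : ℝ)⌋ with hf
  have hf1 : b * (4 * k : ℝ) < f + 1 := Int.lt_floor_add_one _
  have hf0 : 0 ≤ f := Int.floor_nonneg.2 (by positivity)
  have hle : (4 * k : ℤ) ≤ |x 0| + 4 ∧ f ≤ |x 1| + 4 := by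
    rcases hmin with rfl | h
    · have := abs_nonneg (x 0)
      have := abs_nonneg (x 1)
      simp only [hf]
      simp
      omega
    · omega
  have htot : (4 * k + j : ℤ) + dist1 x (source b (4 * k + j)) ≤ m + 16 := by
    rw [hd]
    by_cases hx0 : |x 0| ≤ 4 * k
    · by_cases hx1 : |x 1| ≤ f
      · rw [abs_of_nonpos (show |x 0| - 4 * (k : ℤ) ≤ 0 by omega),
          abs_of_nonpos (show |x 1| - f ≤ 0 by omega)]
        omega
      -- Past `|x 0|` but below `|x 1|`: the slanted side of the hexagon is what bounds the distance.
      · have key : |x 1| - f < m - |x 0| + 1 := by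
          have hx0' : |(x 0 : ℝ)| ≤ 4 * k := by exact_mod_cast hx0
          have : |(x 1 : ℝ)| - f < m - |(x 0 : ℝ)| + 1 := by
            nlinarith [mul_le_mul_of_nonneg_left hx0' hb]
          exact_mod_cast this
        rw [abs_of_nonpos (show |x 0| - 4 * (k : ℤ) ≤ 0 by omega),
          abs_of_nonneg (show 0 ≤ |x 1| - f by omega)]
        omega
    · have hx1 := hk.resolve_left hx0
      rw [abs_of_nonneg (show 0 ≤ |x 0| - 4 * (k : ℤ) by omega),
        abs_of_nonpos (show |x 1| - f ≤ 0 by omega)]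
      omega
  have hnn : 0 ≤ dist1 x (source b (4 * k + j)) := Finset.sum_nonneg fun i _ => abs_nonneg _
  have h := mem_fires_of_dist hV (w := source b) (t := 4 * k + j)
    (by rw [hV]; exact hexagon_subset_grid (sub_nonneg.2 hb1) _ (source_mem_hexagon hb _))
    (m + 16 - (4 * k + j)) x (by omega)
  rwa [show 4 * k + j + (m + 16 - (4 * k + j)) = m + 16 by omega] at h

/-! ### Counting lattice points -/

theorem sum_abs_Icc (m : ℕ) : ∑ i ∈ Finset.Icc (-m : ℤ) m, |(i : ℝ)| = m * (m + 1) := by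
  induction m with
  | zero => simp
  | succ m ih =>
    have h : Finset.Icc (-(m + 1 : ℕ) : ℤ) (m + 1 : ℕ) =
        insert (-(m + 1 : ℤ)) (insert (m + 1 : ℤ) (Finset.Icc (-m : ℤ) m)) := by
      ext i
      simp only [Finset.mem_Icc, Finset.mem_insert]
      omega
    rw [h, Finset.sum_insert (by simp; omega), Finset.sum_insert (by simp), ih]
    push_cast
    rw [abs_neg, abs_of_nonneg (by positivity)]
    ring

/-- The number of lattice points of the hexagon, counted by columns. -/
theorem hexagon_ncard (c : ℝ) (m : ℕ) : (hexagon c m).ncard =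
    ∑ i ∈ Finset.Icc (-m : ℤ) m,
      (Finset.Icc (-⌊m - c * |(i : ℝ)|⌋) ⌊m - c * |(i : ℝ)|⌋).card := by
  classical
  rw [← Finset.card_sigma, ← Set.ncard_coe_finset]
  refine Set.ncard_congr (fun x _ => ⟨x 0, x 1⟩) ?_ ?_ ?_
  · rintro x ⟨h0, h1⟩
    rw [Finset.mem_coe, Finset.mem_sigma, Finset.mem_Icc, Finset.mem_Icc, ← abs_le, ← abs_le]
    refine ⟨h0, Int.le_floor.2 ?_⟩
    push_cast
    linarith
  · intro x y _ _ h
    simp only [Sigma.mk.injEq, heq_eq_eq] at h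
    ext i
    fin_cases i
    · exact h.1
    · exact h.2
  · rintro ⟨i, j⟩ h
    rw [Finset.mem_coe, Finset.mem_sigma, Finset.mem_Icc, Finset.mem_Icc, ← abs_le, ← abs_le]
      at h
    refine ⟨![i, j], ⟨h.1, ?_⟩, rfl⟩
    have := Int.le_floor.1 h.2
    push_cast at this
    simp
    linarith

theorem column_card {r : ℝ} (hr : 0 ≤ r) :
    2 * r - 1 ≤ (Finset.Icc (-⌊r⌋) ⌊r⌋).card ∧ ((Finset.Icc (-⌊r⌋) ⌊r⌋).card : ℝ) ≤ 2 * r + 1 := by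
  have h : ((Finset.Icc (-⌊r⌋) ⌊r⌋).card : ℝ) = 2 * ⌊r⌋ + 1 := by
    have h0 := Int.floor_nonneg.2 hr
    have : ((Finset.Icc (-⌊r⌋) ⌊r⌋).card : ℤ) = 2 * ⌊r⌋ + 1 := by
      rw [Int.card_Icc]
      omega
    exact_mod_cast this
  rw [h]
  constructor <;> linarith [Int.floor_le r, Int.lt_floor_add_one r]

theorem column_nonneg {c : ℝ} (hc1 : c ≤ 1) {m : ℕ} {i : ℤ}
    (hi : i ∈ Finset.Icc (-m : ℤ) m) : 0 ≤ m - c * |(i : ℝ)| := by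
  rw [Finset.mem_Icc, ← abs_le] at hi
  have : |(i : ℝ)| ≤ m := by exact_mod_cast hi
  nlinarith [abs_nonneg (i : ℝ)]

theorem sum_column (c a : ℝ) (m : ℕ) :
    ∑ i ∈ Finset.Icc (-m : ℤ) m, (2 * (m - c * |(i : ℝ)|) + a) =
      (2 * m + 1) * (2 * m + a) - 2 * c * (m * (m + 1)) := by
  have hcard : ((Finset.Icc (-m : ℤ) m).card : ℝ) = 2 * m + 1 := by
    have : (Finset.Icc (-m : ℤ) m).card = 2 * m + 1 := by
      rw [Int.card_Icc]
      omega
    exact_mod_cast this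
  rw [← sum_abs_Icc, Finset.mul_sum, ← hcard, ← nsmul_eq_mul, ← Finset.sum_const,
    ← Finset.sum_sub_distrib]
  exact Finset.sum_congr rfl fun i _ => by ring

theorem hexagon_ncard_le {c : ℝ} (hc1 : c ≤ 1) (m : ℕ) :
    ((hexagon c m).ncard : ℝ) ≤ (2 * m + 1) * (2 * m + 1) - 2 * c * (m * (m + 1)) := by
  rw [hexagon_ncard, ← sum_column, Nat.cast_sum]
  exact Finset.sum_le_sum fun i hi => (column_card (column_nonneg hc1 hi)).2

theorem le_hexagon_ncard {c : ℝ} (hc1 : c ≤ 1) (m : ℕ) :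
    (2 * m + 1) * (2 * m - 1) - 2 * c * (m * (m + 1)) ≤ ((hexagon c m).ncard : ℝ) := by
  rw [hexagon_ncard, Nat.cast_sum, sub_eq_add_neg (2 * (m : ℝ)), ← sum_column]
  exact Finset.sum_le_sum fun i hi => by
    rw [← sub_eq_add_neg]
    exact (column_card (column_nonneg hc1 hi)).1

/-- The square `[-n, n]²` is the hexagon with `c = 0`. -/
theorem sqGrid_eq_hexagon (n : ℕ) : sqGrid n = hexagon 0 n := by
  ext x
  simp only [sqGrid, hexagon, Set.mem_ofPred_eq, Fin.forall_fin_two, zero_mul, zero_add]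
  refine and_congr_right fun _ => ?_
  rw [← Int.cast_abs]
  norm_cast

theorem sqGrid_ncard (n : ℕ) : (sqGrid n).ncard = (2 * n + 1) ^ 2 := by
  have h : (Finset.Icc (-n : ℤ) n).card = 2 * n + 1 := by
    rw [Int.card_Icc]
    omega
  rw [sqGrid_eq_hexagon, hexagon_ncard]
  simp only [zero_mul, sub_zero, Int.floor_natCast, Finset.sum_const, h, smul_eq_mul]
  ring

theorem sqGrid_finite (n : ℕ) : (sqGrid n).Finite :=
  Set.finite_of_ncard_ne_zero (by rw [sqGrid_ncard]; positivity)

theorem abs_density_sub_le {V : ℕ → Set (Pt 2)} (hV : ∀ n : ℕ, V n = sqGrid n) {b : ℝ}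
    (hb : 0 ≤ b) (hb1 : b ≤ 1) {n : ℕ} (hn : 16 ≤ n) :
    |((fires V (source b) n).ncard : ℝ) / ((V n).ncard : ℝ) - (1 + b) / 2| ≤
      100 / (2 * n + 1 : ℝ) := by
  obtain ⟨m, rfl⟩ := Nat.exists_eq_add_of_le' hn
  have hfin : (hexagon (1 - b) (m + 16)).Finite :=
    (sqGrid_finite _).subset (hexagon_subset_grid (sub_nonneg.2 hb1) _)
  have hsub := fires_subset hV hb hb1 (m + 16)
  have hlo : ((hexagon (1 - b) m).ncard : ℝ) ≤ (fires V (source b) (m + 16)).ncard := by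
    exact_mod_cast Set.ncard_le_ncard (hexagon_subset hV hb hb1 m) (hfin.subset hsub)
  have hup : ((fires V (source b) (m + 16)).ncard : ℝ) ≤ (hexagon (1 - b) (m + 16)).ncard := by
    exact_mod_cast Set.ncard_le_ncard hsub hfin
  have h1 := (le_hexagon_ncard (c := 1 - b) (by linarith) m).trans hlo
  have h2 := hup.trans (hexagon_ncard_le (c := 1 - b) (by linarith) (m + 16))
  rw [hV, sqGrid_ncard]
  generalize ((fires V (source b) (m + 16)).ncard : ℝ) = F at *
  push_cast at *
  have hm : (0 : ℝ) ≤ m := Nat.cast_nonneg m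
  generalize (m : ℝ) = y at *
  have hy : 0 < 2 * (y + 16) + 1 := by positivity
  rw [abs_le, ← neg_div, div_le_iff₀ hy, le_div_iff₀ hy]
  have e : (F / (2 * (y + 16) + 1) ^ 2 - (1 + b) / 2) * (2 * (y + 16) + 1) =
      (F - (1 + b) / 2 * (2 * (y + 16) + 1) ^ 2) / (2 * (y + 16) + 1) := by
    field_simp
  rw [e, le_div_iff₀ hy, div_le_iff₀ hy]
  constructor <;> nlinarith [mul_nonneg hm hb, mul_nonneg hm (sub_nonneg.2 hb1)]

end Burning

open Burning in
/-- for the grids `S_n = [-n, n]²`, every `ε ∈ [1/2, 1]` is achieved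
as the burning density of a valid activator sequence. -/
theorem stmt1 (ε : ℝ) (hε₁ : 1 / 2 ≤ ε) (hε₂ : ε ≤ 1)
    (V : ℕ → Set (Pt 2)) (hV : ∀ n : ℕ, V n = sqGrid n) :
    ∃ v : ℕ → Option (Pt 2),
      IsActivator V v ∧ IsValid V v ∧
      Filter.Tendsto (densitySeq V v) Filter.atTop (nhds ε) := by
  classical
  have hb : 0 ≤ 2 * ε - 1 := by linarith
  have hb1 : 2 * ε - 1 ≤ 1 := by linarith
  have hmem : ∀ n, source (2 * ε - 1) n ∈ V n := fun n => by
    rw [hV]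
    exact hexagon_subset_grid (sub_nonneg.2 hb1) _ (source_mem_hexagon hb _)
  refine ⟨filterSeq V (source (2 * ε - 1)), ?_, ?_, ?_⟩
  · intro n x hx
    rw [filterSeq_eq hx]
    exact hmem n
  · intro n x hx
    have hxw := filterSeq_eq hx
    refine ⟨hxw ▸ hmem (n + 1), ?_⟩
    rw [burnSet_filterSeq, hxw]
    intro hin
    simp [filterSeq, hin] at hx
  · have hlim : Tendsto (fun n : ℕ => 100 / (2 * n + 1 : ℝ)) atTop (𝓝 0) := by
      refine Tendsto.div_atTop tendsto_const_nhds ?_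
      exact tendsto_atTop_add_const_right _ _
        (tendsto_natCast_atTop_atTop.const_mul_atTop (by norm_num))
    rw [tendsto_iff_norm_sub_tendsto_zero]
    refine squeeze_zero' (Eventually.of_forall fun _ => norm_nonneg _) ?_ hlim
    filter_upwards [eventually_ge_atTop 16] with n hn
    have h := abs_density_sub_le hV hb hb1 hn
    rw [show (1 + (2 * ε - 1)) / 2 = ε by ring] at h
    rwa [densitySeq, burnSet_filterSeq, Real.norm_eq_abs]
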